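/- arXiv:1809.00565 — 2 statements merged into one kernel-verified Lean document; each statement's English description precedes it below -/
import Mathlib

section
/- Let n ≥ 2 and let (V, [·,…,·]) be an n-Leibniz algebra over ℝ. Equip the (n-1)-fold tensor power T = V ⊗ ⋯ ⊗ V (n−1 factors) with the bilinear bracket [·,·]_F determined on pure tensors by [u₁⊗⋯⊗u_{n-1}, v₁⊗⋯⊗v_{n-1}]_F = Σ_{i=1}^{n-1} v₁⊗⋯⊗v_{i-1}⊗[u₁,…,u_{n-1},v_i]⊗v_{i+1}⊗⋯⊗v_{n-1}. Then (T, [·,·]_F) is a (left) Leibniz algebra: [U,[V,W]_F]_F = [[U,V]_F,W]_F + [V,[U,W]_F]_F for all U,V,W ∈ T. -/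
open Function

/-!
An endomorphism `f` of `V` acts on `⨂ V` by `D f = ∑ᵢ 1 ⊗ ⋯ ⊗ f ⊗ ⋯ ⊗ 1`, and `D` turns a relation
`f g = h + g f` into `D f D g = D h + D g D f`, because operators acting on different factors
commute. Writing `ad U` for the endomorphism `x ↦ [U, x]` of `V`, the bracket on the tensor power is
`[U, W]_F = D (ad U) W`, and the fundamental identity says that
`ad U ad W = ad [U, W]_F + ad W ad U`. Applying `D` to this relation gives the Leibniz identity.
-/

section TensorDerivation

variable {ι R : Type*} [DecidableEq ι] [CommSemiring R]
  {M : ι → Type*} [∀ i, AddCommMonoid (M i)] [∀ i, Module R (M i)]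

/-- The action `a ↦ 1 ⊗ ⋯ ⊗ a ⊗ ⋯ ⊗ 1` of the endomorphisms of the `i`-th factor on `⨂ᵢ Mᵢ`. -/
noncomputable def factorEnd (i : ι) :
    Module.End R (M i) →ₐ[R] Module.End R (PiTensorProduct R M) :=
  AlgHom.ofLinearMap ((PiTensorProduct.mapMultilinear R M M).toLinearMap 1 i)
    (map_one (PiTensorProduct.mapMonoidHom.comp
      (MonoidHom.mulSingle (fun i => Module.End R (M i)) i)))
    (map_mul (PiTensorProduct.mapMonoidHom.comp
      (MonoidHom.mulSingle (fun i => Module.End R (M i)) i)))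

theorem factorEnd_tprod (i : ι) (a : Module.End R (M i)) (x : ∀ i, M i) :
    factorEnd i a (PiTensorProduct.tprod R x) =
      PiTensorProduct.tprod R (update x i (a (x i))) :=
  (PiTensorProduct.map_tprod _ x).trans <| congrArg _ <| funext fun j =>
    apply_update (fun k (g : Module.End R (M k)) => g (x k)) 1 i a j

theorem factorEnd_commute {i j : ι} (hij : i ≠ j) (a : Module.End R (M i))
    (b : Module.End R (M j)) : Commute (factorEnd i a) (factorEnd j b) :=
  (Pi.mulSingle_commute (f := fun i => Module.End R (M i)) hij a b).map
    PiTensorProduct.mapMonoidHom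

variable [Fintype ι]

/-- The operator `∑ᵢ 1 ⊗ ⋯ ⊗ fᵢ ⊗ ⋯ ⊗ 1` on `⨂ᵢ Mᵢ` attached to a family of endomorphisms `fᵢ`. -/
noncomputable def tensorDerivation :
    (∀ i, Module.End R (M i)) →ₗ[R] Module.End R (PiTensorProduct R M) :=
  ∑ i, (factorEnd i).toLinearMap ∘ₗ LinearMap.proj i

theorem tensorDerivation_apply (f : ∀ i, Module.End R (M i)) :
    tensorDerivation f = ∑ i, factorEnd i (f i) := by
  simp only [tensorDerivation, LinearMap.sum_apply, LinearMap.comp_apply, LinearMap.proj_apply,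
    AlgHom.toLinearMap_apply]

theorem tensorDerivation_tprod (f : ∀ i, Module.End R (M i)) (x : ∀ i, M i) :
    tensorDerivation f (PiTensorProduct.tprod R x) =
      ∑ i, PiTensorProduct.tprod R (update x i (f i (x i))) := by
  simp only [tensorDerivation_apply, LinearMap.sum_apply, factorEnd_tprod]

theorem tensorDerivation_mul_eq_add {f g h : ∀ i, Module.End R (M i)}
    (hfg : ∀ i, f i * g i = h i + g i * f i) :
    tensorDerivation f * tensorDerivation g =
      tensorDerivation h + tensorDerivation g * tensorDerivation f := by
  have factorEnd_mul (i j : ι) : factorEnd i (f i) * factorEnd j (g j) =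
      (if i = j then factorEnd i (h i) else 0) + factorEnd j (g j) * factorEnd i (f i) := by
    split_ifs with hij
    · subst hij
      rw [← map_mul, ← map_mul, ← map_add, hfg]
    · rw [zero_add, (factorEnd_commute hij (f i) (g j)).eq]
  simp only [tensorDerivation_apply]
  calc (∑ i, factorEnd i (f i)) * ∑ j, factorEnd j (g j)
      = ∑ i, ∑ j, factorEnd i (f i) * factorEnd j (g j) := Finset.sum_mul_sum ..
    _ = ∑ i, factorEnd i (h i) + ∑ i, ∑ j, factorEnd j (g j) * factorEnd i (f i) := by
      simp only [factorEnd_mul, Finset.sum_add_distrib, Finset.sum_ite_eq, Finset.mem_univ, if_true]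
    _ = ∑ i, factorEnd i (h i) + (∑ j, factorEnd j (g j)) * ∑ i, factorEnd i (f i) := by
      rw [Finset.sum_comm, Finset.sum_mul_sum]

end TensorDerivation

section FundamentalBracket

variable {R V : Type*} [CommSemiring R] [AddCommMonoid V] [Module R V] {p : ℕ}

/-- The fundamental identity of a `(p + 1)`-Leibniz algebra: bracketing with `u₁, …, u_p` on the
left is a derivation of the bracket. -/
def FundamentalIdentity (br : MultilinearMap R (fun _ : Fin (p + 1) => V) V) : Prop :=
  ∀ (u : Fin p → V) (v : Fin (p + 1) → V),
    br (Fin.snoc u (br v)) = ∑ i, br (update v i (br (Fin.snoc u (v i))))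

/-- The left multiplication `u₁ ⊗ ⋯ ⊗ u_p ↦ [u₁, …, u_p, ·]`. -/
noncomputable def tensorAd (br : MultilinearMap R (fun _ : Fin (p + 1) => V) V) :
    PiTensorProduct R (fun _ : Fin p => V) →ₗ[R] Module.End R V :=
  PiTensorProduct.lift br.curryRight

theorem tensorAd_tprod_apply (br : MultilinearMap R (fun _ : Fin (p + 1) => V) V)
    (u : Fin p → V) (x : V) :
    tensorAd br (PiTensorProduct.tprod R u) x = br (Fin.snoc u x) := by
  rw [tensorAd, PiTensorProduct.lift.tprod]
  rfl

/-- The bracket `[·,·]_F` on the tensor power: `[U, ·]_F` is the extension of `[U, ·]` to `⨂ V` as a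
derivation. -/
noncomputable def fundamentalBracket (br : MultilinearMap R (fun _ : Fin (p + 1) => V) V) :
    PiTensorProduct R (fun _ : Fin p => V) →ₗ[R]
      Module.End R (PiTensorProduct R (fun _ : Fin p => V)) :=
  tensorDerivation ∘ₗ LinearMap.pi fun _ => tensorAd br

theorem fundamentalBracket_apply (br : MultilinearMap R (fun _ : Fin (p + 1) => V) V)
    (U : PiTensorProduct R (fun _ : Fin p => V)) :
    fundamentalBracket br U = tensorDerivation fun _ => tensorAd br U :=
  rfl

theorem fundamentalBracket_tprod_tprod (br : MultilinearMap R (fun _ : Fin (p + 1) => V) V)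
    (u v : Fin p → V) :
    fundamentalBracket br (PiTensorProduct.tprod R u) (PiTensorProduct.tprod R v) =
      ∑ i, PiTensorProduct.tprod R (update v i (br (Fin.snoc u (v i)))) := by
  simp only [fundamentalBracket_apply, tensorDerivation_tprod, tensorAd_tprod_apply]

variable {br : MultilinearMap R (fun _ : Fin (p + 1) => V) V}

theorem FundamentalIdentity.br_snoc_br_snoc (hbr : FundamentalIdentity br) (u w : Fin p → V)
    (x : V) :
    br (Fin.snoc u (br (Fin.snoc w x))) =
      ∑ i, br (Fin.snoc (update w i (br (Fin.snoc u (w i)))) x) +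
        br (Fin.snoc w (br (Fin.snoc u x))) := by
  simpa only [Fin.sum_univ_castSucc, Fin.snoc_castSucc, Fin.snoc_last, Fin.snoc_update,
    Fin.update_snoc_last] using hbr u (Fin.snoc w x)

theorem FundamentalIdentity.tensorAd_mul_tensorAd (hbr : FundamentalIdentity br)
    (U W : PiTensorProduct R (fun _ : Fin p => V)) :
    tensorAd br U * tensorAd br W =
      tensorAd br (fundamentalBracket br U W) + tensorAd br W * tensorAd br U := by
  let mulAd := (LinearMap.mul R (Module.End R V)).compl₁₂ (tensorAd br) (tensorAd br)
  suffices mulAd = (fundamentalBracket br).compr₂ (tensorAd br) + mulAd.flip from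
    LinearMap.congr_fun₂ this U W
  ext u w x
  simpa [mulAd, tensorAd_tprod_apply, fundamentalBracket_tprod_tprod] using
    hbr.br_snoc_br_snoc u w x

theorem FundamentalIdentity.fundamentalBracket_leibniz (hbr : FundamentalIdentity br)
    (U W Z : PiTensorProduct R (fun _ : Fin p => V)) :
    fundamentalBracket br U (fundamentalBracket br W Z) =
      fundamentalBracket br (fundamentalBracket br U W) Z +
        fundamentalBracket br W (fundamentalBracket br U Z) :=
  LinearMap.congr_fun
    (tensorDerivation_mul_eq_add fun _ => hbr.tensorAd_mul_tensorAd U W) Z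

end FundamentalBracket

theorem statement5_general {R V : Type*} [CommSemiring R] [AddCommMonoid V] [Module R V] {p : ℕ}
    (br : MultilinearMap R (fun _ : Fin (p + 1) => V) V) (hbr : FundamentalIdentity br)
    (brF : PiTensorProduct R (fun _ : Fin p => V) →ₗ[R]
      PiTensorProduct R (fun _ : Fin p => V) →ₗ[R] PiTensorProduct R (fun _ : Fin p => V))
    (hbrF : ∀ u v : Fin p → V,
      brF (PiTensorProduct.tprod R u) (PiTensorProduct.tprod R v) =
        ∑ i, PiTensorProduct.tprod R (update v i (br (Fin.snoc u (v i)))))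
    (U W Z : PiTensorProduct R (fun _ : Fin p => V)) :
    brF U (brF W Z) = brF (brF U W) Z + brF W (brF U Z) := by
  obtain rfl : brF = fundamentalBracket br := by
    ext u v
    exact (hbrF u v).trans (fundamentalBracket_tprod_tprod br u v).symm
  exact hbr.fundamentalBracket_leibniz U W Z

/-- Let `n = m + 2 ≥ 2` and let `(V, [·,…,·])` be an `n`-Leibniz algebra over
`ℝ`.  Equip the `(n-1)`-fold tensor power `T = V ⊗ ⋯ ⊗ V` with the bilinear bracket `[·,·]_F`
determined on pure tensors by
`[u₁⊗⋯⊗u_{n-1}, v₁⊗⋯⊗v_{n-1}]_F = Σ_i v₁⊗⋯⊗[u₁,…,u_{n-1},v_i]⊗⋯⊗v_{n-1}`.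
Then `(T, [·,·]_F)` is a (left) Leibniz algebra:
`[U,[W,Z]_F]_F = [[U,W]_F,Z]_F + [W,[U,Z]_F]_F`. -/
theorem statement5 (m : ℕ) {V : Type*} [AddCommGroup V] [Module ℝ V]
    (br : MultilinearMap ℝ (fun _ : Fin (m + 2) => V) V)
    -- fundamental identity
    (hFI : ∀ (u : Fin (m + 1) → V) (v : Fin (m + 2) → V),
      br (Fin.snoc u (br v)) =
        ∑ i : Fin (m + 2), br (Function.update v i (br (Fin.snoc u (v i)))))
    -- the bilinear bracket `[·,·]_F` on the tensor power, determined on pure tensors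
    (brF : PiTensorProduct ℝ (fun _ : Fin (m + 1) => V) →ₗ[ℝ]
      PiTensorProduct ℝ (fun _ : Fin (m + 1) => V) →ₗ[ℝ]
        PiTensorProduct ℝ (fun _ : Fin (m + 1) => V))
    (hbrF : ∀ u v : Fin (m + 1) → V,
      brF (PiTensorProduct.tprod ℝ u) (PiTensorProduct.tprod ℝ v) =
        ∑ i : Fin (m + 1),
          PiTensorProduct.tprod ℝ (Function.update v i (br (Fin.snoc u (v i))))) :
    ∀ U W Z : PiTensorProduct ℝ (fun _ : Fin (m + 1) => V),
      brF U (brF W Z) = brF (brF U W) Z + brF W (brF U Z) :=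
  statement5_general br hFI brF hbrF
end

section
/- Let n ≥ 2 and let (V, [·,…,·], S) be a generalized metric n-Leibniz algebra over ℝ. Let D̂ : V⊗⋯⊗V (n−1 factors) → gl(V) be the linear map induced by the multilinear map D(u₁,…,u_{n-1})v = [u₁,…,u_{n-1},v], and let B be the bilinear form on the tensor power determined on pure tensors by B(u₁⊗⋯⊗u_{n-1}, v₁⊗⋯⊗v_{n-1}) = S([u₁,…,u_{n-1},v₁], v₂,…,v_{n-1}). Then B is non-degenerate (B(U,W) = 0 for all W implies U = 0) if and only if ker D̂ = 0. -/
open Function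

/-- The operator `D(u₁,…,u_{n-1}) ∈ gl(V)`, `D(u₁,…,u_{n-1})v = [u₁,…,u_{n-1},v]`. -/
noncomputable def Dop (m : ℕ) {V : Type*} [AddCommGroup V] [Module ℝ V]
    (br : MultilinearMap ℝ (fun _ : Fin (m + 2) => V) V)
    (u : Fin (m + 1) → V) : Module.End ℝ V where
  toFun v := br (Fin.snoc u v)
  map_add' x y := by
    simpa [Fin.update_snoc_last] using br.map_update_add (Fin.snoc u x) (Fin.last (m + 1)) x y
  map_smul' c x := by
    simpa [Fin.update_snoc_last] using br.map_update_smul (Fin.snoc u x) (Fin.last (m + 1)) c x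

/-!
Non-degeneracy of `S` makes the pairing `(A, v₁ ⊗ ⋯ ⊗ vₖ) ↦ S (A v₁, v₂, …, vₖ)` of `gl(V)` with
the tensor power non-degenerate on the `gl(V)` side. The form `B` is this pairing composed with
`D̂` in its first argument, so the left radical of `B` is exactly `ker D̂`.
-/

section SlotPairing

open PiTensorProduct
open scoped TensorProduct

variable {R ι κ N P : Type*} {M : ι → Type*} {W : κ → Type*} [CommSemiring R]
  [∀ i, AddCommMonoid (M i)] [∀ i, Module R (M i)]
  [∀ k, AddCommMonoid (W k)] [∀ k, Module R (W k)]
  [AddCommMonoid N] [Module R N] [AddCommMonoid P] [Module R P] [DecidableEq ι]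

/-- Non-degeneracy of a multilinear map in its `i`-th argument. For a symmetric form and any `i`,
this is the usual notion of non-degeneracy. -/
def SeparatingAt (S : MultilinearMap R M N) (i : ι) : Prop :=
  ∀ x : M i, (∀ v : Π j, M j, S (update v i x) = 0) → x = 0

/-- The pairing of endomorphisms of the `i`-th factor with tensors induced by a multilinear map:
it sends `A` and `v₁ ⊗ ⋯ ⊗ vₙ` to `S (v₁, …, A vᵢ, …, vₙ)`. -/
noncomputable def slotPairing (S : MultilinearMap R M N) (i : ι) :
    Module.End R (M i) →ₗ[R] (⨂[R] j, M j) →ₗ[R] N :=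
  lift.toLinearMap ∘ₗ
    (MultilinearMap.piLinearMap S).toLinearMap (fun _ => LinearMap.id) i

theorem slotPairing_tprod (S : MultilinearMap R M N) (i : ι) (A : Module.End R (M i))
    (v : Π j, M j) : slotPairing S i A (tprod R v) = S (update v i (A (v i))) := by
  have slotwise (j : ι) : update (fun j => (LinearMap.id : M j →ₗ[R] M j)) i A j (v j) =
      update v i (A (v i)) j :=
    apply_update (fun j (f : M j →ₗ[R] M j) => f (v j)) _ i A j
  simp [slotPairing, slotwise]

theorem ker_slotPairing_eq_bot {S : MultilinearMap R M N} {i : ι} (hS : SeparatingAt S i) :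
    LinearMap.ker (slotPairing S i) = ⊥ := by
  refine LinearMap.ker_eq_bot'.2 fun A hA => LinearMap.ext fun x => hS (A x) fun v => ?_
  simpa [hA] using (slotPairing_tprod S i A (update v i x)).symm

theorem separatingLeft_slotPairing_comp_iff {S : MultilinearMap R M N} {i : ι}
    (hS : SeparatingAt S i) (f : P →ₗ[R] Module.End R (M i)) :
    (slotPairing S i ∘ₗ f).SeparatingLeft ↔ LinearMap.ker f = ⊥ := by
  rw [LinearMap.separatingLeft_iff_ker_eq_bot,
    LinearMap.ker_comp_of_ker_eq_bot f (ker_slotPairing_eq_bot hS)]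

theorem statement8_general {S : MultilinearMap R M N} {i : ι} (hS : SeparatingAt S i)
    {D : (Π k, W k) → Module.End R (M i)}
    {Dhat : (⨂[R] k, W k) →ₗ[R] Module.End R (M i)} (hDhat : ∀ u, Dhat (tprod R u) = D u)
    {B : (⨂[R] k, W k) →ₗ[R] (⨂[R] j, M j) →ₗ[R] N}
    (hB : ∀ u v, B (tprod R u) (tprod R v) = S (update v i (D u (v i)))) :
    B.SeparatingLeft ↔ LinearMap.ker Dhat = ⊥ := by
  have B_eq : B = slotPairing S i ∘ₗ Dhat := by
    ext u v
    simp [hB, hDhat, slotPairing_tprod]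
  rw [B_eq, separatingLeft_slotPairing_comp_iff hS]

end SlotPairing

/-- Let `n = m + 2 ≥ 2` and let `(V, [·,…,·], S)` be a generalized metric
`n`-Leibniz algebra over `ℝ`.  Let `D̂` be the linear map from the `(n-1)`-fold tensor power
of `V` to `gl(V)` induced by `D`, and let `B` be the bilinear form on the tensor power
determined on pure tensors by `B(u₁⊗⋯⊗u_{n-1}, v₁⊗⋯⊗v_{n-1}) = S([u₁,…,u_{n-1},v₁],
v₂,…,v_{n-1})`.  Then `B` is non-degenerate if and only if `ker D̂ = 0`. -/
theorem statement8 (m : ℕ) {V : Type*} [AddCommGroup V] [Module ℝ V]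
    (br : MultilinearMap ℝ (fun _ : Fin (m + 2) => V) V)
    (S : MultilinearMap ℝ (fun _ : Fin (m + 1) => V) ℝ)
    -- fundamental identity
    (hFI : ∀ (u : Fin (m + 1) → V) (v : Fin (m + 2) → V),
      br (Fin.snoc u (br v)) =
        ∑ i : Fin (m + 2), br (Function.update v i (br (Fin.snoc u (v i)))))
    -- `S` is symmetric
    (hSsymm : ∀ (σ : Equiv.Perm (Fin (m + 1))) (w : Fin (m + 1) → V), S (w ∘ σ) = S w)
    -- `S` is non-degenerate
    (hSnd : ∀ u : V, (∀ w : Fin (m + 1) → V, S (Function.update w 0 u) = 0) → u = 0)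
    -- unitarity condition
    (hUnit : ∀ (u w : Fin (m + 1) → V),
      ∑ i : Fin (m + 1), S (Function.update w i (br (Fin.snoc u (w i)))) = 0)
    -- symmetry condition
    (hSymCond : ∀ (u v : Fin (m + 1) → V),
      S (Function.update v 0 (br (Fin.snoc u (v 0)))) =
        S (Function.update u 0 (br (Fin.snoc v (u 0)))))
    -- `D̂`, the linear map induced by the multilinear map `D` on the tensor power
    (Dhat : PiTensorProduct ℝ (fun _ : Fin (m + 1) => V) →ₗ[ℝ] Module.End ℝ V)
    (hDhat : ∀ u : Fin (m + 1) → V, Dhat (PiTensorProduct.tprod ℝ u) = Dop m br u)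
    -- the bilinear form `B` on the tensor power, determined on pure tensors
    (B : PiTensorProduct ℝ (fun _ : Fin (m + 1) => V) →ₗ[ℝ]
      PiTensorProduct ℝ (fun _ : Fin (m + 1) => V) →ₗ[ℝ] ℝ)
    (hB : ∀ u v : Fin (m + 1) → V,
      B (PiTensorProduct.tprod ℝ u) (PiTensorProduct.tprod ℝ v) =
        S (Function.update v 0 (br (Fin.snoc u (v 0))))) :
    (∀ U : PiTensorProduct ℝ (fun _ : Fin (m + 1) => V),
        (∀ W : PiTensorProduct ℝ (fun _ : Fin (m + 1) => V), B U W = 0) → U = 0) ↔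
      LinearMap.ker Dhat = ⊥ :=
  statement8_general (S := S) (i := 0) (D := Dop m br) hSnd hDhat hB
end
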